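/- arXiv:1204.2222 — 6 statements merged into one kernel-verified Lean document; each statement's English description precedes it below -/
import Mathlib

section
/- Let H be a complex Hilbert space, let U ∈ B(H) be unitary, and suppose U^{n₀} = I for some positive integer n₀. Then for all self-adjoint A, B ∈ B(H), the inequalities B ≤ A ≤ U*BU imply B = A = U*BU. -/
variable {H : Type*} [NormedAddCommGroup H] [InnerProductSpace ℂ H] [CompleteSpace H]

/-!
Conjugation `x ↦ star u * x * u` is monotone, so `b ≤ star u * b * u` makes the orbit of `b`
increasing. If the orbit also returns to `b`, the whole cycle is squeezed between two copies of `b`.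
-/

theorem isFixedPt_of_mem_periodicPts_of_le_map {α : Type*} [PartialOrder α] {f : α → α} {x : α}
    (hf : Monotone f) (hper : x ∈ Function.periodicPts f) (hx : x ≤ f x) :
    Function.IsFixedPt f x := by
  obtain ⟨n, hn, hfix⟩ := hper
  refine le_antisymm ?_ hx
  calc
    f x ≤ f^[n] x := hf.monotone_iterate_of_le_map hx hn
    _ = x := hfix

theorem mul_left_mul_right_iterate {M : Type*} [Monoid M] (a b : M) (n : ℕ) :
    (fun x ↦ a * x * b)^[n] = fun x ↦ a ^ n * x * b ^ n := by
  have hcomm : Function.Commute (· * b) (a * ·) := fun x ↦ mul_assoc a x b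
  calc
    ((· * b) ∘ (a * ·))^[n] = (· * b)^[n] ∘ (a * ·)^[n] := hcomm.comp_iterate n
    _ = (· * b ^ n) ∘ (a ^ n * ·) := by rw [mul_right_iterate, mul_left_iterate]

section StarOrderedRing

variable {R : Type*} [Semiring R] [PartialOrder R] [StarRing R] [StarOrderedRing R]

theorem star_left_conjugate_eq_self_of_le {u b : R} {n : ℕ} (hn : 0 < n)
    (hper : star (u ^ n) * b * u ^ n = b) (hb : b ≤ star u * b * u) : star u * b * u = b := by
  have hmono : Monotone fun x ↦ star u * x * u :=
    fun _ _ hxy ↦ star_left_conjugate_le_conjugate hxy u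
  have hmem : b ∈ Function.periodicPts fun x ↦ star u * x * u := by
    refine Function.mk_mem_periodicPts hn ?_
    rwa [Function.IsPeriodicPt, Function.IsFixedPt, mul_left_mul_right_iterate, ← star_pow]
  exact isFixedPt_of_mem_periodicPts_of_le_map hmono hmem hb

theorem eq_of_le_le_unitary_conj_of_pow_eq_one_general {u a b : R} {n : ℕ} (hn : 0 < n)
    (hper : star (u ^ n) * b * u ^ n = b) (hba : b ≤ a) (hab : a ≤ star u * b * u) :
    b = a ∧ a = star u * b * u := by
  have hfix : star u * b * u = b := star_left_conjugate_eq_self_of_le hn hper (hba.trans hab)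
  have hba_eq : b = a := hba.antisymm (hab.trans_eq hfix)
  exact ⟨hba_eq, hba_eq.symm.trans hfix.symm⟩

end StarOrderedRing

/-- Theorem 2.4(i): if `U` is unitary with `U^{n₀} = I` for some positive integer `n₀`,
then `B ≤ A ≤ U*BU` implies `B = A = U*BU` for self-adjoint `A, B`. -/
theorem eq_of_le_le_unitary_conj_of_pow_eq_one (U : H →L[ℂ] H)
    (hU : U ∈ unitary (H →L[ℂ] H)) (n₀ : ℕ) (hn₀ : 0 < n₀) (hUn : U ^ n₀ = 1)
    (A B : H →L[ℂ] H) (hA : IsSelfAdjoint A) (hB : IsSelfAdjoint B)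
    (h₁ : B ≤ A) (h₂ : A ≤ star U * B * U) :
    B = A ∧ A = star U * B * U := by
  exact eq_of_le_le_unitary_conj_of_pow_eq_one_general hn₀ (by simp [hUn]) h₁ h₂
end

section
/- Let H be a complex Hilbert space and let U, V ∈ B(H) be commuting unitary operators such that U^{n₀} = I and V^{n₀} = I for some positive integer n₀. If A, B ∈ B(H) are self-adjoint with A ≤ U*BU and B ≤ V*AV, then A = U*BU and B = V*AV. -/
variable {H : Type*} [NormedAddCommGroup H] [InnerProductSpace ℂ H] [CompleteSpace H]

/-!
Conjugation `a ↦ u* a u` is monotone, and chaining the two inequalities gives `a ≤ w* a w` with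
`w = vu`. Iterating this produces an increasing sequence which returns to `a` after `n` steps
because `wⁿ = 1`, so it is constant; hence every inequality in `a ≤ u* b u ≤ w* a w` is an equality.
Exchanging the two roles, with `uv` in place of `vu`, gives the other equality.
-/

section PeriodicPoints

open Function

variable {α β : Type*} [PartialOrder α] {n : ℕ} {a : α}

theorem isFixedPt_of_isPeriodicPt_of_le_map {f : α → α} (hf : Monotone f) (hn : 0 < n)
    (ha : IsPeriodicPt f n a) (hle : a ≤ f a) : IsFixedPt f a := by
  refine le_antisymm ?_ hle
  calc
    f a ≤ f^[n] a := hf.monotone_iterate_of_le_map hle (Nat.one_le_of_lt hn)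
    _ = a := ha

theorem eq_map_of_le_map_of_isPeriodicPt_comp [Preorder β] {f : β → α} {g : α → β} {b : β}
    (hf : Monotone f) (hg : Monotone g) (hn : 0 < n) (ha : IsPeriodicPt (f ∘ g) n a)
    (hab : a ≤ f b) (hba : b ≤ g a) : a = f b := by
  have hfix : f (g a) = a :=
    isFixedPt_of_isPeriodicPt_of_le_map (hf.comp hg) hn ha (hab.trans (hf hba))
  exact hab.antisymm ((hf hba).trans_eq hfix)

end PeriodicPoints

/-- The conjugation `a ↦ u* a u` by an arbitrary element `u`, the map to be iterated.
The star stands on the left, so a product `u * v` conjugates by `u` first. -/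
def starConj {M : Type*} [Mul M] [Star M] (u a : M) : M :=
  star u * a * u

namespace starConj

section Monoid

variable {M : Type*} [Monoid M] [StarMul M]

theorem one : starConj (1 : M) = id := by
  ext a
  simp [starConj]

theorem mul (u v : M) : starConj (u * v) = starConj v ∘ starConj u := by
  ext a
  simp only [starConj, star_mul, mul_assoc, Function.comp_apply]

theorem iterate (u : M) (n : ℕ) : (starConj u)^[n] = starConj (u ^ n) := by
  induction n with
  | zero => rw [Function.iterate_zero, pow_zero, one]
  | succ n ih => rw [Function.iterate_succ, ih, pow_succ', mul]

theorem isPeriodicPt_comp {u v : M} {n : ℕ} (h : (v * u) ^ n = 1) (a : M) :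
    Function.IsPeriodicPt (starConj u ∘ starConj v) n a := by
  rw [← mul, Function.IsPeriodicPt, iterate, h, one]
  exact Function.isFixedPt_id a

end Monoid

section StarOrderedRing

variable {R : Type*} [Semiring R] [PartialOrder R] [StarRing R] [StarOrderedRing R]

theorem monotone (u : R) : Monotone (starConj u) :=
  fun _ _ hab => star_left_conjugate_le_conjugate hab u

theorem eq_of_le_of_le {u v a b : R} {n : ℕ} (hn : 0 < n) (h : (v * u) ^ n = 1)
    (hab : a ≤ starConj u b) (hba : b ≤ starConj v a) : a = starConj u b :=
  eq_map_of_le_map_of_isPeriodicPt_comp (monotone u) (monotone v) hn (isPeriodicPt_comp h a)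
    hab hba

end StarOrderedRing

end starConj

theorem antisymmetry_of_pow_eq_one_general {R : Type*} [Semiring R] [PartialOrder R] [StarRing R]
    [StarOrderedRing R] {u v a b : R} {n : ℕ} (hn : 0 < n)
    (huv : (u * v) ^ n = 1) (hvu : (v * u) ^ n = 1)
    (hab : a ≤ star u * b * u) (hba : b ≤ star v * a * v) :
    a = star u * b * u ∧ b = star v * a * v :=
  ⟨starConj.eq_of_le_of_le hn hvu hab hba, starConj.eq_of_le_of_le hn huv hba hab⟩

/-- Corollary 2.5(i): commuting unitaries with `U^{n₀} = V^{n₀} = I`; if `A ≤ U*BU` and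
`B ≤ V*AV` then both inequalities are equalities. -/
theorem antisymmetry_of_pow_eq_one (U V : H →L[ℂ] H)
    (hU : U ∈ unitary (H →L[ℂ] H)) (hV : V ∈ unitary (H →L[ℂ] H))
    (hcomm : U * V = V * U) (n₀ : ℕ) (hn₀ : 0 < n₀)
    (hUn : U ^ n₀ = 1) (hVn : V ^ n₀ = 1)
    (A B : H →L[ℂ] H) (hA : IsSelfAdjoint A) (hB : IsSelfAdjoint B)
    (h₁ : A ≤ star U * B * U) (h₂ : B ≤ star V * A * V) :
    A = star U * B * U ∧ B = star V * A * V := by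
  have hUV : (U * V) ^ n₀ = 1 := by rw [Commute.mul_pow hcomm, hUn, hVn, one_mul]
  exact antisymmetry_of_pow_eq_one_general hn₀ hUV (hcomm ▸ hUV) h₁ h₂
end

section
/- Let H be a complex Hilbert space and let T ∈ B(H) be an invertible hyponormal operator whose polar decomposition is T = U|T| with U unitary. If U^{n₀} = I for some positive integer n₀, or if U^n → I in the strong operator topology as n → ∞, then T is normal. -/
/-!
Substituting `T = U|T|` gives `TT* = U(T*T)U*`, so hyponormality reads `UAU* ≤ A` with `A = T*T`.
Conjugating by powers of `U` makes `UᵏAU*ᵏ` decreasing in `k`; if `Uⁿ = 1` this sequence returns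
to `A`, hence is constant. Strong convergence of `Uⁿ` to `1` is no new case: `ξ = lim Uⁿξ` is
fixed by `U`, so `U = 1`.
-/

variable {H : Type*} [NormedAddCommGroup H] [InnerProductSpace ℂ H] [CompleteSpace H]

open Filter Topology

section Conjugation

variable {R : Type*} [Semiring R] [PartialOrder R] [StarRing R] [StarOrderedRing R] {u a : R}

theorem antitone_pow_conjugate (h : u * a * star u ≤ a) :
    Antitone fun k : ℕ ↦ u ^ k * a * star (u ^ k) := by
  refine antitone_nat_of_succ_le fun k ↦ ?_
  calc u ^ (k + 1) * a * star (u ^ (k + 1))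
      = u ^ k * (u * a * star u) * star (u ^ k) := by simp only [pow_succ, star_mul, mul_assoc]
    _ ≤ u ^ k * a * star (u ^ k) := star_right_conjugate_le_conjugate h (u ^ k)

theorem conjugate_eq_of_le_of_isOfFinOrder (hu : IsOfFinOrder u) (h : u * a * star u ≤ a) :
    u * a * star u = a := by
  obtain ⟨n, hn, hun⟩ := isOfFinOrder_iff_pow_eq_one.mp hu
  refine le_antisymm h ?_
  calc a = u ^ n * a * star (u ^ n) := by simp only [hun, star_one, one_mul, mul_one]
    _ ≤ u ^ 1 * a * star (u ^ 1) := antitone_pow_conjugate h hn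
    _ = u * a * star u := by rw [pow_one]

end Conjugation

section PolarDecomposition

variable {A : Type*} [NonUnitalRing A] [StarRing A] [TopologicalSpace A] [Module ℝ A]
  [SMulCommClass ℝ A A] [IsScalarTower ℝ A A]
  [NonUnitalContinuousFunctionalCalculus ℝ A IsSelfAdjoint] [PartialOrder A] [StarOrderedRing A]
  [NonnegSpectrumClass ℝ A] [IsTopologicalRing A] [T2Space A]

theorem mul_star_self_eq_conjugate_of_eq_mul_abs {t u : A} (h : t = u * CFC.abs t) :
    t * star t = u * (star t * t) * star u :=
  calc t * star t = u * CFC.abs t * star (u * CFC.abs t) := by rw [← h]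
    _ = u * (CFC.abs t * CFC.abs t) * star u := by
      rw [star_mul, (CFC.abs_nonneg t).isSelfAdjoint.star_eq]
      simp only [mul_assoc]
    _ = u * (star t * t) * star u := by rw [CFC.abs_mul_abs]

end PolarDecomposition

section Hyponormal

variable {A : Type*} [Ring A] [StarRing A] [TopologicalSpace A] [Algebra ℝ A]
  [ContinuousFunctionalCalculus ℝ A IsSelfAdjoint] [PartialOrder A] [StarOrderedRing A]
  [NonnegSpectrumClass ℝ A] [IsTopologicalRing A] [T2Space A]

theorem cfc_sqrt_star_mul_self (t : A) : cfc Real.sqrt (star t * t) = CFC.abs t := by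
  rw [CFC.abs, CFC.sqrt_eq_real_sqrt _ (star_mul_self_nonneg t), cfcₙ_eq_cfc]

theorem normal_of_hyponormal_polar_general {t u : A} (hhyp : t * star t ≤ star t * t)
    (hpolar : t = u * cfc Real.sqrt (star t * t)) (hu : IsOfFinOrder u) :
    star t * t = t * star t := by
  rw [cfc_sqrt_star_mul_self] at hpolar
  have hconj := mul_star_self_eq_conjugate_of_eq_mul_abs hpolar
  rw [hconj] at hhyp ⊢
  exact (conjugate_eq_of_le_of_isOfFinOrder hu hhyp).symm

end Hyponormal

theorem eq_one_of_tendsto_pow_apply {R M : Type*} [Semiring R]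
    [AddCommMonoid M] [TopologicalSpace M] [T2Space M] [Module R M] {f : M →L[R] M}
    (h : ∀ x, Tendsto (fun n : ℕ ↦ (f ^ n) x) atTop (𝓝 x)) : f = 1 := by
  ext x
  have hiter : Tendsto (fun n ↦ f^[n] x) atTop (𝓝 x) := by
    simpa only [FunLike.coe_pow_eq_iterate] using h x
  exact isFixedPt_of_tendsto_iterate hiter f.continuous.continuousAt

/-- Lemma 2.2: an invertible hyponormal operator `T` with polar decomposition `T = U|T|`,
where the unitary `U` satisfies `U^{n₀} = I` for some `n₀ ≥ 1` or `Uⁿ → I` strongly,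
is normal. Here `|T| = (T*T)^{1/2}` is given by the continuous functional calculus. -/
theorem normal_of_hyponormal_polar (T U : H →L[ℂ] H) (hT : IsUnit T)
    (hhyp : T * star T ≤ star T * T)
    (hU : U ∈ unitary (H →L[ℂ] H))
    (hpolar : T = U * cfc Real.sqrt (star T * T))
    (h : (∃ n₀ : ℕ, 0 < n₀ ∧ U ^ n₀ = 1) ∨
      ∀ ξ : H, Filter.Tendsto (fun n : ℕ => (U ^ n) ξ) Filter.atTop (nhds ξ)) :
    star T * T = T * star T := by
  refine normal_of_hyponormal_polar_general hhyp hpolar ?_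
  exact h.elim isOfFinOrder_iff_pow_eq_one.mpr fun hlim ↦ eq_one_of_tendsto_pow_apply hlim ▸ .one
end

section
/- Let H be a complex Hilbert space, let A, B ∈ B(H) be positive operators, and let {U_n}_{n∈ℕ} be a sequence of unitary operators such that A^n ≤ U_n* B^n U_n for every n ∈ ℕ and U_n → U in the strong operator topology for some unitary operator U ∈ B(H). Then A^n ≤ U* B^n U for every n ∈ ℕ. -/
variable {H : Type*} [NormedAddCommGroup H] [InnerProductSpace ℂ H] [CompleteSpace H]

/-!
For `m ≤ n` the function `t ↦ t ^ (m / n)` is operator monotone (Löwner–Heinz), so an inequality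
between `n`-th powers of positive operators passes to `m`-th powers. Since conjugation by a unitary
commutes with powers, `Aⁿ ≤ Uₙ* Bⁿ Uₙ` gives `Aᵐ ≤ Uₙ* Bᵐ Uₙ` for all `n ≥ m`. Now the exponent no
longer depends on `n`, and letting `n → ∞` in the quadratic forms
`⟪Bᵐ Uₙ x, Uₙ x⟫ - ⟪Aᵐ x, x⟫ ≥ 0` gives the claim.
-/

open Filter Topology
open scoped ComplexOrder InnerProduct InnerProductSpace

section CStarAlgebra

variable {𝓐 : Type*} [CStarAlgebra 𝓐] [PartialOrder 𝓐] [StarOrderedRing 𝓐] {a b : 𝓐} {m n : ℕ}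

theorem rpow_natCast_div_pow (ha : 0 ≤ a) (m : ℕ) (hn : n ≠ 0) :
    (a ^ n) ^ ((m : ℝ) / n) = a ^ m :=
  calc (a ^ n) ^ ((m : ℝ) / n)
      = (a ^ (n : ℝ)) ^ ((m : ℝ) / n) := by rw [CFC.rpow_natCast a n ha]
    _ = a ^ ((n : ℝ) * (m / n)) :=
      CFC.rpow_rpow_of_exponent_nonneg a _ _ (by positivity) (by positivity) ha
    _ = a ^ (m : ℝ) := by rw [mul_div_cancel₀ _ (Nat.cast_ne_zero.mpr hn)]
    _ = a ^ m := CFC.rpow_natCast a m ha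

theorem pow_le_pow_of_pow_le_pow (ha : 0 ≤ a) (hb : 0 ≤ b) (hmn : m ≤ n) (h : a ^ n ≤ b ^ n) :
    a ^ m ≤ b ^ m := by
  obtain rfl | hn := eq_or_ne n 0
  · rwa [Nat.le_zero.mp hmn]
  have hexp : (m : ℝ) / n ∈ Set.Icc 0 1 :=
    ⟨by positivity, div_le_one_of_le₀ (Nat.cast_le.mpr hmn) (Nat.cast_nonneg n)⟩
  simpa only [rpow_natCast_div_pow ha m hn, rpow_natCast_div_pow hb m hn]
    using CFC.rpow_le_rpow hexp h

theorem pow_le_unitary_conj_pow_of_le (ha : 0 ≤ a) (hb : 0 ≤ b) (u : unitary 𝓐) (hmn : m ≤ n)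
    (h : a ^ n ≤ star (u : 𝓐) * b ^ n * u) : a ^ m ≤ star (u : 𝓐) * b ^ m * u := by
  have conj_pow (k : ℕ) : star (u : 𝓐) * b ^ k * u = (star (u : 𝓐) * b * u) ^ k := by
    simp only [← Unitary.conjStarAlgAut_star_apply (S := ℂ), map_pow]
  rw [conj_pow] at h ⊢
  exact pow_le_pow_of_pow_le_pow ha (star_left_conjugate_nonneg hb _) hmn h

end CStarAlgebra

section StrongLimit

variable {𝕜 E F ι : Type*} [RCLike 𝕜] [NormedAddCommGroup E] [InnerProductSpace 𝕜 E]
  [NormedAddCommGroup F] [InnerProductSpace 𝕜 F] {l : Filter ι}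

theorem isPositive_of_tendsto_inner {T : ι → E →L[𝕜] E} {S : E →L[𝕜] E}
    (hT : ∃ᶠ i in l, (T i).IsPositive)
    (hlim : ∀ x y, Tendsto (fun i => ⟪T i x, y⟫_𝕜) l (𝓝 ⟪S x, y⟫_𝕜)) : S.IsPositive := by
  refine (ContinuousLinearMap.isPositive_iff S).mpr ⟨fun x y => ?_, fun x => ?_⟩
  · have hlim_right : Tendsto (fun i => ⟪x, T i y⟫_𝕜) l (𝓝 ⟪x, S y⟫_𝕜) := by
      simpa only [inner_conj_symm, Function.comp_def] using
        (RCLike.continuous_conj.tendsto _).comp (hlim y x)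
    exact isClosed_diagonal.mem_of_frequently_of_tendsto
      (hT.mono fun i hi => hi.isSymmetric x y) ((hlim x y).prodMk_nhds hlim_right)
  · exact ge_of_tendsto_of_frequently (hlim x x) (hT.mono fun i hi => hi.inner_nonneg_left x)

theorem le_adjoint_conj_of_tendsto [CompleteSpace E] [CompleteSpace F]
    {A : E →L[𝕜] E} {B : F →L[𝕜] F} {T : ι → E →L[𝕜] F} {S : E →L[𝕜] F}
    (hle : ∃ᶠ i in l, A ≤ (T i)† ∘L B ∘L T i)
    (hlim : ∀ x, Tendsto (fun i => T i x) l (𝓝 (S x))) : A ≤ S† ∘L B ∘L S := by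
  refine isPositive_of_tendsto_inner (T := fun i => (T i)† ∘L B ∘L T i - A) hle fun x y => ?_
  have hform (R : E →L[𝕜] F) :
      ⟪(R† ∘L B ∘L R - A) x, y⟫_𝕜 = ⟪B (R x), R y⟫_𝕜 - ⟪A x, y⟫_𝕜 := by
    simp [inner_sub_left, ContinuousLinearMap.adjoint_inner_left]
  simp only [hform]
  exact (((B.continuous.tendsto _).comp (hlim x)).inner (hlim y)).sub_const _

end StrongLimit

theorem pow_le_conj_of_sot_lim_general {ι : Type*} {l : Filter ι} {k : ι → ℕ}
    (hk : Tendsto k l atTop) {A B : H →L[ℂ] H} (hA : 0 ≤ A) (hB : 0 ≤ B)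
    (U : ι → unitary (H →L[ℂ] H))
    (hle : ∃ᶠ i in l, A ^ k i ≤ star (U i : H →L[ℂ] H) * B ^ k i * U i) {W : H →L[ℂ] H}
    (hlim : ∀ ξ, Tendsto (fun i => (U i : H →L[ℂ] H) ξ) l (𝓝 (W ξ))) (m : ℕ) :
    A ^ m ≤ star W * B ^ m * W := by
  have hle_m : ∃ᶠ i in l, A ^ m ≤ star (U i : H →L[ℂ] H) * B ^ m * U i :=
    (hle.and_eventually (hk.eventually_ge_atTop m)).mono fun i hi =>
      pow_le_unitary_conj_pow_of_le hA hB (U i) hi.2 hi.1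
  simp only [mul_assoc] at hle_m ⊢
  exact le_adjoint_conj_of_tendsto hle_m hlim

/-- If `Aⁿ ≤ Uₙ* Bⁿ Uₙ` for unitaries `Uₙ` converging strongly to a unitary `U`, then
`Aⁿ ≤ U* Bⁿ U` for every `n`. -/
theorem pow_le_conj_of_sot_lim (A B : H →L[ℂ] H) (hA : 0 ≤ A) (hB : 0 ≤ B)
    (U : ℕ → H →L[ℂ] H) (hU : ∀ n : ℕ, U n ∈ unitary (H →L[ℂ] H))
    (hle : ∀ n : ℕ, A ^ n ≤ star (U n) * B ^ n * U n)
    (W : H →L[ℂ] H) (hW : W ∈ unitary (H →L[ℂ] H))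
    (hlim : ∀ ξ : H, Filter.Tendsto (fun n : ℕ => (U n) ξ) Filter.atTop (nhds (W ξ))) :
    ∀ n : ℕ, A ^ n ≤ star W * B ^ n * W :=
  pow_le_conj_of_sot_lim_general tendsto_id hA hB (fun n => ⟨U n, hU n⟩)
    (Frequently.of_forall hle) hlim
end

section
/- Let H be a complex Hilbert space and let A, B ∈ B(H) be positive operators. For each positive integer n set K_n = {U ∈ B(H) : U unitary and A^n ≤ U* B^n U}. Suppose that for some positive integer n₀ the set K_{n₀} is nonempty and compact in the strong operator topology. Then there exists a unitary operator U ∈ B(H) such that A^n ≤ U* B^n U for every positive integer n. -/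
variable {H : Type*} [NormedAddCommGroup H] [InnerProductSpace ℂ H] [CompleteSpace H]

/-!
For invertible `t` with polar decomposition `t = u|t|`, the unitary `u` conjugates `t * star t` into
`star t * t`. With `t = √b * √a` and `a ≤ b` this gives
`a² ≤ star t * t = star u * (t * star t) * u ≤ star u * b² * u`, so squaring costs only a change of
unitary when `a` is invertible. Iterating reaches arbitrarily high powers, and by Löwner–Heinz
a unitary that works for a high power works for all lower ones.

Put `P = A ^ n₀` and `Q = B ^ n₀`, and choose `U k` working for the powers up to `k + 1` of
`P + 1 / (k + 1)` and `Q + 1 / (k + 1)`. Since scalar shifts do not affect the first power, every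
`U k` lies in `K_{n₀}`; by compactness the `U k` have a cluster point `V` in `K_{n₀}`, and the
inequalities for each fixed power pass to the limit, so `V` works for all powers of `P` and `Q`.
Löwner–Heinz takes `A ^ (n₀ * n)` and `B ^ (n₀ * n)` back to `A ^ n` and `B ^ n`.
-/

open Filter Topology

/-- The unitaries `u` with `a ≤ u* b u`; the set `K_n` attached to `A` and `B` is
`unitaryMajorizers (A ^ n) (B ^ n)`. -/
def unitaryMajorizers {R : Type*} [Monoid R] [StarMul R] [LE R] (a b : R) : Set R :=
  {u | u ∈ unitary R ∧ a ≤ star u * b * u}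

section StarMonoid

variable {R : Type*} [Monoid R] [StarMul R]

lemma star_mul_pow_mul_of_mem_unitary {u : R} (hu : u ∈ unitary R) (b : R) (n : ℕ) :
    star u * b ^ n * u = (star u * b * u) ^ n :=
  ((Unitary.toUnits ⟨u, hu⟩).conj_pow' b n).symm

lemma mem_unitaryMajorizers_pow_iff [LE R] {a b u : R} {n : ℕ} :
    u ∈ unitaryMajorizers (a ^ n) (b ^ n) ↔ u ∈ unitary R ∧ a ^ n ≤ (star u * b * u) ^ n :=
  and_congr_right fun hu ↦ by rw [star_mul_pow_mul_of_mem_unitary hu]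

end StarMonoid

lemma mul_mem_unitaryMajorizers {R : Type*} [Semiring R] [PartialOrder R] [StarRing R]
    [StarOrderedRing R] {a b c u v : R} (hu : u ∈ unitaryMajorizers b c)
    (hv : v ∈ unitaryMajorizers a b) : u * v ∈ unitaryMajorizers a c := by
  refine ⟨mul_mem hu.1 hv.1, ?_⟩
  calc a ≤ star v * b * v := hv.2
    _ ≤ star v * (star u * c * u) * v := star_left_conjugate_le_conjugate hu.2 v
    _ = star (u * v) * c * (u * v) := by simp only [star_mul, mul_assoc]

lemma unitaryMajorizers_add_center {R : Type*} [Semiring R] [PartialOrder R]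
    [IsOrderedCancelAddMonoid R] [StarRing R] {c : R} (hc : c ∈ Set.center R) (a b : R) :
    unitaryMajorizers (a + c) (b + c) = unitaryMajorizers a b := by
  ext u
  refine and_congr_right fun hu ↦ ?_
  have hconj : star u * c * u = c := by
    rw [mul_assoc, hc.comm u, ← mul_assoc, Unitary.star_mul_self_of_mem hu, one_mul]
  rw [mul_add, add_mul, hconj, add_le_add_iff_right]

section CStarAlgebra

variable {R : Type*} [CStarAlgebra R] [PartialOrder R] [StarOrderedRing R]

lemma exists_unitary_mul_cfcAbs_eq_of_isUnit {t : R} (ht : IsUnit t) :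
    ∃ u ∈ unitary R, u * CFC.abs t = t := by
  obtain ⟨m, hm⟩ : IsUnit (CFC.abs t) :=
    IsStrictlyPositive.isUnit_cfcSqrt _ ⟨star_mul_self_nonneg t, ht.star.mul ht⟩
  lift t to Rˣ using ht
  have hm_star : star (m : R) = m := hm ▸ (CFC.abs_nonneg _).isSelfAdjoint.star_eq
  have hu : (t * ↑m⁻¹ : R) ∈ unitary R := by
    rw [Units.mul_inv_mem_unitary, Units.ext_iff]
    simp only [Units.val_mul, Units.coe_star, hm_star]
    rw [hm, CFC.abs_mul_abs]
  exact ⟨t * ↑m⁻¹, hu, by rw [← hm, Units.inv_mul_cancel_right]⟩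

lemma exists_unitary_star_mul_mul_star_mul_eq_of_isUnit {t : R} (ht : IsUnit t) :
    ∃ u ∈ unitary R, star u * (t * star t) * u = star t * t := by
  obtain ⟨u, hu, hut⟩ := exists_unitary_mul_cfcAbs_eq_of_isUnit ht
  have hstar : star u * t = CFC.abs t := by
    calc star u * t = star u * (u * CFC.abs t) := by rw [hut]
      _ = CFC.abs t := by rw [← mul_assoc, Unitary.star_mul_self_of_mem hu, one_mul]
  have habs : star (CFC.abs t) = CFC.abs t := (CFC.abs_nonneg t).isSelfAdjoint.star_eq
  refine ⟨u, hu, ?_⟩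
  calc star u * (t * star t) * u = star u * t * star (star u * t) := by
        simp only [star_mul, star_star, mul_assoc]
    _ = star t * t := by rw [hstar, habs, CFC.abs_mul_abs]

theorem pow_le_pow_of_pow_le_pow_of_le {a b : R} (ha : 0 ≤ a) (hb : 0 ≤ b) {m n : ℕ}
    (h : a ^ n ≤ b ^ n) (hmn : m ≤ n) : a ^ m ≤ b ^ m := by
  rcases n.eq_zero_or_pos with rfl | hn
  · simp [Nat.le_zero.mp hmn]
  have hn' : (0 : ℝ) < n := by exact_mod_cast hn
  have hp : (m / n : ℝ) ∈ Set.Icc (0 : ℝ) 1 :=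
    ⟨by positivity, (div_le_one hn').mpr (by exact_mod_cast hmn)⟩
  have hroot (c : R) (hc : 0 ≤ c) : (c ^ n) ^ (m / n : ℝ) = c ^ m := by
    rw [← CFC.rpow_natCast c n, CFC.rpow_rpow_of_exponent_nonneg c _ _ hn'.le hp.1,
      mul_div_cancel₀ _ hn'.ne', CFC.rpow_natCast c m]
  simpa only [hroot a ha, hroot b hb] using CFC.rpow_le_rpow hp h

lemma unitaryMajorizers_pow_subset {a b : R} (ha : 0 ≤ a) (hb : 0 ≤ b) {m n : ℕ} (hmn : m ≤ n) :
    unitaryMajorizers (a ^ n) (b ^ n) ⊆ unitaryMajorizers (a ^ m) (b ^ m) := by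
  intro u hu
  rw [mem_unitaryMajorizers_pow_iff] at hu ⊢
  exact ⟨hu.1, pow_le_pow_of_pow_le_pow_of_le ha (star_left_conjugate_nonneg hb u) hu.2 hmn⟩

lemma unitaryMajorizers_sq_nonempty_of_le {a b : R} (ha : IsStrictlyPositive a) (hab : a ≤ b) :
    (unitaryMajorizers (a ^ 2) (b ^ 2)).Nonempty := by
  have hb : IsStrictlyPositive b := ha.of_le hab
  set x := CFC.sqrt a
  set y := CFC.sqrt b
  have hx : star x = x := (CFC.sqrt_nonneg a).isSelfAdjoint.star_eq
  have hy : star y = y := (CFC.sqrt_nonneg b).isSelfAdjoint.star_eq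
  have hxx : x * x = a := CFC.sqrt_mul_sqrt_self a ha.nonneg
  have hyy : y * y = b := CFC.sqrt_mul_sqrt_self b hb.nonneg
  obtain ⟨u, hu, huconj⟩ :=
    exists_unitary_star_mul_mul_star_mul_eq_of_isUnit (hb.isUnit_cfcSqrt.mul ha.isUnit_cfcSqrt)
  refine ⟨u, hu, ?_⟩
  calc a ^ 2 = star x * a * x := by rw [hx, ← hxx]; noncomm_ring
    _ ≤ star x * b * x := star_left_conjugate_le_conjugate hab x
    _ = star (y * x) * (y * x) := by rw [star_mul, hy, ← hyy]; noncomm_ring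
    _ = star u * (y * x * star (y * x)) * u := huconj.symm
    _ = star u * (star y * a * y) * u := by rw [star_mul, hx, hy, ← hxx]; noncomm_ring
    _ ≤ star u * (star y * b * y) * u :=
      star_left_conjugate_le_conjugate (star_left_conjugate_le_conjugate hab y) u
    _ = star u * b ^ 2 * u := by rw [hy, ← hyy]; noncomm_ring

lemma unitaryMajorizers_sq_nonempty {a b : R} (ha : IsStrictlyPositive a)
    (hab : (unitaryMajorizers a b).Nonempty) : (unitaryMajorizers (a ^ 2) (b ^ 2)).Nonempty := by
  obtain ⟨u, hu, hle⟩ := hab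
  obtain ⟨v, hv⟩ := unitaryMajorizers_sq_nonempty_of_le ha hle
  exact ⟨u * v, mul_mem_unitaryMajorizers
    ⟨hu, (star_mul_pow_mul_of_mem_unitary hu b 2).ge⟩ hv⟩

lemma unitaryMajorizers_pow_nonempty {a b : R} (ha : IsStrictlyPositive a) (hb : 0 ≤ b)
    (hab : (unitaryMajorizers a b).Nonempty) (n : ℕ) :
    (unitaryMajorizers (a ^ n) (b ^ n)).Nonempty := by
  have hpow_two (k : ℕ) : (unitaryMajorizers (a ^ 2 ^ k) (b ^ 2 ^ k)).Nonempty := by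
    induction k with
    | zero => simpa using hab
    | succ k ih =>
      have hak : IsStrictlyPositive (a ^ 2 ^ k) :=
        ⟨CStarAlgebra.pow_nonneg ha.nonneg _, ha.isUnit.pow _⟩
      simpa only [pow_succ, pow_mul] using unitaryMajorizers_sq_nonempty hak ih
  exact (hpow_two n).mono (unitaryMajorizers_pow_subset ha.nonneg hb n.lt_two_pow_self.le)

end CStarAlgebra

lemma exists_mem_tendsto_apply_of_isCompact_coe_image {F X Y ι : Type*} [FunLike F X Y]
    [TopologicalSpace Y] {K : Set F} (hK : IsCompact ((fun T : F ↦ (T : X → Y)) '' K))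
    (l : Ultrafilter ι) {u : ι → F} (hu : ∀ i, u i ∈ K) :
    ∃ v ∈ K, ∀ x, Tendsto (fun i ↦ u i x) l (𝓝 (v x)) := by
  obtain ⟨-, ⟨v, hv, rfl⟩, hlim⟩ := hK.ultrafilter_le_nhds (l.map fun i ↦ (u i : X → Y))
    (tendsto_principal.mpr (.of_forall fun i ↦ Set.mem_image_of_mem _ (hu i)))
  exact ⟨v, hv, tendsto_pi_nhds.mp hlim⟩

open scoped ComplexOrder in
lemma continuousLinearMap_le_iff_forall_inner_le {E : Type*} [NormedAddCommGroup E]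
    [InnerProductSpace ℂ E] {S T : E →L[ℂ] E} :
    S ≤ T ↔ ∀ x, inner ℂ (S x) x ≤ inner ℂ (T x) x := by
  rw [ContinuousLinearMap.le_def, ContinuousLinearMap.isPositive_iff_complex]
  refine forall_congr' fun x ↦ ?_
  rw [sub_apply, inner_sub_left, ← sub_nonneg (a := inner ℂ (T x) x), Complex.nonneg_iff]
  simp [Complex.ext_iff, and_comm]

open scoped ComplexOrder in
lemma le_star_mul_mul_of_tendsto {ι : Type*} {l : Filter ι} [l.NeBot] {S T U : ι → H →L[ℂ] H}
    {S₀ T₀ U₀ : H →L[ℂ] H} (hS : Tendsto S l (𝓝 S₀)) (hT : Tendsto T l (𝓝 T₀))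
    (hU : ∀ x, Tendsto (fun i ↦ U i x) l (𝓝 (U₀ x)))
    (hle : ∀ᶠ i in l, S i ≤ star (U i) * T i * U i) : S₀ ≤ star U₀ * T₀ * U₀ := by
  have hinner (T U : H →L[ℂ] H) (x : H) :
      inner ℂ ((star U * T * U) x) x = inner ℂ (T (U x)) (U x) :=
    U.adjoint_inner_left _ _
  refine continuousLinearMap_le_iff_forall_inner_le.mpr fun x ↦ ?_
  rw [hinner]
  have hTU : Tendsto (fun i ↦ T i (U i x)) l (𝓝 (T₀ (U₀ x))) :=
    (isBoundedBilinearMap_apply.continuous.tendsto (T₀, U₀ x)).comp (hT.prodMk_nhds (hU x))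
  refine le_of_tendsto_of_tendsto ((hS.eval_const x).inner tendsto_const_nhds)
    (hTU.inner (hU x)) (hle.mono fun i hi ↦ ?_)
  simpa only [hinner] using continuousLinearMap_le_iff_forall_inner_le.mp hi x

lemma tendsto_add_algebraMap_pow {ι 𝕜 R : Type*} [CommSemiring 𝕜] [TopologicalSpace 𝕜]
    [Semiring R] [TopologicalSpace R] [IsTopologicalSemiring R] [Algebra 𝕜 R] [ContinuousSMul 𝕜 R]
    {l : Filter ι} {e : ι → 𝕜} (he : Tendsto e l (𝓝 0)) (a : R) (n : ℕ) :
    Tendsto (fun i ↦ (a + algebraMap 𝕜 R (e i)) ^ n) l (𝓝 (a ^ n)) := by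
  have hcont : Continuous fun r : 𝕜 ↦ (a + algebraMap 𝕜 R r) ^ n := by fun_prop
  simpa [Function.comp_def] using (hcont.tendsto 0).comp he

theorem exists_forall_mem_unitaryMajorizers_pow {P Q : H →L[ℂ] H} (hP : 0 ≤ P) (hQ : 0 ≤ Q)
    (hne : (unitaryMajorizers P Q).Nonempty)
    (hcpt : IsCompact ((fun T : H →L[ℂ] H ↦ (T : H → H)) '' unitaryMajorizers P Q)) :
    ∃ V, ∀ n : ℕ, V ∈ unitaryMajorizers (P ^ n) (Q ^ n) := by
  let e (k : ℕ) : ℝ := 1 / (k + 1)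
  let shift (T : H →L[ℂ] H) (k : ℕ) : H →L[ℂ] H := T + algebraMap ℝ _ (e k)
  have hshift (k : ℕ) : IsStrictlyPositive (algebraMap ℝ (H →L[ℂ] H) (e k)) :=
    isStrictlyPositive_algebraMap (by positivity)
  have hPk (k : ℕ) : IsStrictlyPositive (shift P k) := .nonneg_add hP (hshift k)
  have hQk (k : ℕ) : 0 ≤ shift Q k := add_nonneg hQ (hshift k).nonneg
  have heq (k : ℕ) : unitaryMajorizers (shift P k) (shift Q k) = unitaryMajorizers P Q :=
    unitaryMajorizers_add_center (Set.algebraMap_mem_center _) P Q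
  choose U hU using fun k ↦
    unitaryMajorizers_pow_nonempty (hPk k) (hQk k) (by rwa [heq]) (k + 1)
  have hU_pow {n k : ℕ} (hnk : n ≤ k + 1) :
      U k ∈ unitaryMajorizers (shift P k ^ n) (shift Q k ^ n) :=
    unitaryMajorizers_pow_subset (hPk k).nonneg (hQk k) hnk (hU k)
  have hU_mem (k : ℕ) : U k ∈ unitaryMajorizers P Q := by
    simpa only [pow_one, heq] using hU_pow k.succ_pos
  obtain ⟨V, hV, hUV⟩ := exists_mem_tendsto_apply_of_isCompact_coe_image hcpt (hyperfilter ℕ) hU_mem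
  have he : Tendsto e (hyperfilter ℕ) (𝓝 0) :=
    tendsto_one_div_add_atTop_nhds_zero_nat.mono_left Nat.hyperfilter_le_atTop
  refine ⟨V, fun n ↦ ⟨hV.1, le_star_mul_mul_of_tendsto (tendsto_add_algebraMap_pow he P n)
    (tendsto_add_algebraMap_pow he Q n) hUV ?_⟩⟩
  filter_upwards [Nat.hyperfilter_le_atTop (eventually_ge_atTop n)] with k hk
  exact (hU_pow (Nat.le_succ_of_le hk)).2

/-- Theorem 2.9 (strong operator topology case): if the set
`K_{n₀} = {U unitary : A^{n₀} ≤ U* B^{n₀} U}` is nonempty and compact in the strong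
operator topology (encoded via the embedding `T ↦ ⇑T` into `H → H` with the topology of
pointwise convergence), then some unitary `U` satisfies `Aⁿ ≤ U* Bⁿ U` for all `n ≥ 1`. -/
theorem exists_unitary_pow_le_of_sot_compact (A B : H →L[ℂ] H) (hA : 0 ≤ A) (hB : 0 ≤ B)
    (n₀ : ℕ) (hn₀ : 0 < n₀)
    (hne : {U : H →L[ℂ] H | U ∈ unitary (H →L[ℂ] H) ∧
        A ^ n₀ ≤ star U * B ^ n₀ * U}.Nonempty)
    (hcpt : IsCompact ((fun T : H →L[ℂ] H => (T : H → H)) ''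
        {U : H →L[ℂ] H | U ∈ unitary (H →L[ℂ] H) ∧ A ^ n₀ ≤ star U * B ^ n₀ * U})) :
    ∃ U ∈ unitary (H →L[ℂ] H), ∀ n : ℕ, 0 < n → A ^ n ≤ star U * B ^ n * U := by
  have hA₀ : 0 ≤ A ^ n₀ := CStarAlgebra.pow_nonneg hA n₀
  have hB₀ : 0 ≤ B ^ n₀ := CStarAlgebra.pow_nonneg hB n₀
  obtain ⟨V, hV⟩ := exists_forall_mem_unitaryMajorizers_pow hA₀ hB₀ hne hcpt
  refine ⟨V, (hV 0).1, fun n _ ↦ ?_⟩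
  have hVn : V ∈ unitaryMajorizers (A ^ (n₀ * n)) (B ^ (n₀ * n)) := by
    simpa only [pow_mul] using hV n
  exact (unitaryMajorizers_pow_subset hA hB (Nat.le_mul_of_pos_left n hn₀) hVn).2
end

section
/- Let H be a complex Hilbert space, let A, B ∈ B(H) be operators with 0 < A (A positive and invertible) and A ≤ U* B U for some unitary U ∈ B(H), and let g : [0,∞) → [0,∞) be a continuous operator monotone function with g(A) > 0. Then for every real r > 0 there exists a unitary V ∈ B(H) with g(A)^{2r} ≤ V* U* g(B)^{2r} U V; in particular g(A)^{2r} ≤_u g(B)^{2r}. -/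
/-!
Squaring is not operator monotone, but it is monotone up to a unitary: if `0 < a ≤ b`, then
`a² ≤ a^(1/2) b a^(1/2) = x⋆x` and `x x⋆ = b^(1/2) a b^(1/2) ≤ b²` for `x = b^(1/2) a^(1/2)`, and
`x⋆x` and `x x⋆` are unitarily equivalent because `x` is invertible. To reach an arbitrary exponent
`s ≥ 0`, choose `n` with `s ≤ 2 ^ n`, apply the Löwner–Heinz inequality to the exponent `s / 2 ^ n`
and square `n` times. Since `A ≤ U⋆BU` gives `g(A) ≤ U⋆g(B)U`, it remains to take `a = g(A)` and
`b = U⋆g(B)U`.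
-/

variable {H : Type*} [NormedAddCommGroup H] [InnerProductSpace ℂ H] [CompleteSpace H]

section StarLeftConjugate

variable {R : Type*}

theorem star_left_conjugate_pow [Monoid R] [StarMul R] {u : R} (hu : u ∈ unitary R) (a : R)
    (n : ℕ) : (star u * a * u) ^ n = star u * a ^ n * u :=
  Units.conj_pow' (Unitary.toUnits ⟨u, hu⟩) a n

theorem cfc_star_left_conjugate [Ring R] [StarRing R] [TopologicalSpace R] [ContinuousMul R]
    [Algebra ℝ R] [ContinuousFunctionalCalculus ℝ R IsSelfAdjoint] [ContinuousMap.UniqueHom ℝ R]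
    {u a : R} (hu : u ∈ unitary R) (ha : IsSelfAdjoint a) {f : ℝ → ℝ}
    (hf : ContinuousOn f (spectrum ℝ a)) :
    cfc f (star u * a * u) = star u * cfc f a * u := by
  have hcont : Continuous (Unitary.conjStarAlgAut ℝ R (star ⟨u, hu⟩)) := by
    change Continuous fun x ↦ star u * x * star (star u)
    fun_prop
  simpa using (StarAlgHomClass.map_cfc (S := ℝ) (Unitary.conjStarAlgAut ℝ R (star ⟨u, hu⟩)) f a hf
    hcont ha (ha.map _)).symm

end StarLeftConjugate

theorem exists_mem_unitary_mul_abs_eq {E : Type*} [CStarAlgebra E] [PartialOrder E]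
    [StarOrderedRing E] {x : E} (hx : IsUnit x) : ∃ v ∈ unitary E, v * CFC.abs x = x := by
  have habs : IsUnit (CFC.abs x) :=
    (CFC.isUnit_sqrt_iff _ (star_mul_self_nonneg x)).2 (hx.star.mul hx)
  lift x to Eˣ using hx
  obtain ⟨p, hp⟩ := habs
  have hsq : star (x : E) * x = star (p : E) * p := by
    rw [hp, (CFC.abs_nonneg (x : E)).star_eq, CFC.abs_mul_abs]
  exact ⟨x * ↑p⁻¹, (Units.mul_inv_mem_unitary x p).2 (Units.ext hsq), by simp [← hp]⟩

/-- The relation `a ≤ᵤ b`: some unitary conjugate `v⋆bv` of `b` dominates `a`. When `a` is strictly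
positive and `a ≤ b`, it holds between `a ^ s` and `b ^ s` even for exponents `s > 1`, for which
`a ^ s ≤ b ^ s` may fail. -/
def UnitaryLE {R : Type*} [Monoid R] [StarMul R] [LE R] (a b : R) : Prop :=
  ∃ v ∈ unitary R, a ≤ star v * b * v

namespace UnitaryLE

section Monoid

variable {R : Type*} [Monoid R] [StarMul R] [LE R] {a b : R}

theorem of_le (h : a ≤ b) : UnitaryLE a b :=
  ⟨1, one_mem _, by simpa using h⟩

theorem of_star_left_conjugate {u : R} (hu : u ∈ unitary R) (h : UnitaryLE a (star u * b * u)) :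
    UnitaryLE a b := by
  obtain ⟨v, hv, hle⟩ := h
  exact ⟨u * v, mul_mem hu hv, by simpa [mul_assoc] using hle⟩

end Monoid

theorem trans {R : Type*} [Semiring R] [StarRing R] [PartialOrder R] [StarOrderedRing R]
    {a b c : R} (hab : UnitaryLE a b) (hbc : UnitaryLE b c) : UnitaryLE a c := by
  obtain ⟨u, hu, hau⟩ := hab
  obtain ⟨v, hv, hbv⟩ := hbc
  exact of_star_left_conjugate hv ⟨u, hu, hau.trans (star_left_conjugate_le_conjugate hbv u)⟩

section CStarAlgebra

variable {E : Type*} [CStarAlgebra E] [PartialOrder E] [StarOrderedRing E] {a b x : E}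

theorem star_mul_self_self_mul_star (hx : IsUnit x) : UnitaryLE (star x * x) (x * star x) := by
  obtain ⟨v, hv, hpolar⟩ := exists_mem_unitary_mul_abs_eq hx
  have habs : CFC.abs x = star v * x := by
    rw [← hpolar, ← mul_assoc, Unitary.star_mul_self_of_mem hv, one_mul, hpolar]
  refine ⟨v, hv, le_of_eq ?_⟩
  calc star x * x = CFC.abs x * star (CFC.abs x) := by
        rw [(CFC.abs_nonneg x).star_eq, CFC.abs_mul_abs]
    _ = star v * (x * star x) * v := by rw [habs, star_mul, star_star]; simp only [mul_assoc]

theorem sq_of_le (ha : IsStrictlyPositive a) (hab : a ≤ b) : UnitaryLE (a ^ 2) (b ^ 2) := by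
  have hb : IsStrictlyPositive b := ha.of_le hab
  set p := CFC.sqrt a
  set q := CFC.sqrt b
  have hp : IsSelfAdjoint p := .of_nonneg (CFC.sqrt_nonneg a)
  have hq : IsSelfAdjoint q := .of_nonneg (CFC.sqrt_nonneg b)
  have hpa : p * p = a := CFC.sqrt_mul_sqrt_self a ha.nonneg
  have hqb : q * q = b := CFC.sqrt_mul_sqrt_self b hb.nonneg
  have hleft : a ^ 2 ≤ star (q * p) * (q * p) := calc
    a ^ 2 = p * a * p := by rw [← hpa]; noncomm_ring
    _ ≤ p * b * p := hp.conjugate_le_conjugate hab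
    _ = star (q * p) * (q * p) := by rw [star_mul, hp.star_eq, hq.star_eq, ← hqb]; noncomm_ring
  have hright : q * p * star (q * p) ≤ b ^ 2 := calc
    q * p * star (q * p) = q * a * q := by
      rw [star_mul, hp.star_eq, hq.star_eq, ← hpa]; noncomm_ring
    _ ≤ q * b * q := hq.conjugate_le_conjugate hab
    _ = b ^ 2 := by rw [← hqb]; noncomm_ring
  exact (of_le hleft).trans <|
    (star_mul_self_self_mul_star (hb.isUnit_cfcSqrt.mul ha.isUnit_cfcSqrt)).trans (of_le hright)

theorem sq (ha : IsStrictlyPositive a) (hab : UnitaryLE a b) : UnitaryLE (a ^ 2) (b ^ 2) := by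
  obtain ⟨u, hu, hle⟩ := hab
  apply of_star_left_conjugate hu
  rw [← star_left_conjugate_pow hu]
  exact sq_of_le ha hle

theorem pow_two_pow (ha : IsStrictlyPositive a) (hab : UnitaryLE a b) (n : ℕ) :
    UnitaryLE (a ^ 2 ^ n) (b ^ 2 ^ n) := by
  induction n with
  | zero => simpa using hab
  | succ n ih =>
    have hpos : IsStrictlyPositive (a ^ 2 ^ n) := by
      simpa only [← CFC.rpow_natCast _ _ ha.nonneg] using ha.rpow a _
    simpa only [pow_succ 2 n, pow_mul] using ih.sq hpos

theorem rpow_of_le (ha : IsStrictlyPositive a) (hab : a ≤ b) {s : ℝ} (hs : 0 ≤ s) :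
    UnitaryLE (a ^ s) (b ^ s) := by
  obtain ⟨n, hn⟩ := pow_unbounded_of_one_lt s one_lt_two
  have hs_div : s / 2 ^ n ∈ Set.Icc 0 1 :=
    ⟨by positivity, div_le_one_of_le₀ hn.le (by positivity)⟩
  have rpow_eq {c : E} (hc : 0 ≤ c) : c ^ s = (c ^ (s / 2 ^ n)) ^ 2 ^ n := by
    rw [← CFC.rpow_natCast _ _ CFC.rpow_nonneg,
      CFC.rpow_rpow_of_exponent_nonneg c _ _ hs_div.1 (by positivity) hc]
    simp
  rw [rpow_eq ha.nonneg, rpow_eq (ha.nonneg.trans hab)]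
  exact (of_le (CFC.rpow_le_rpow hs_div hab)).pow_two_pow (ha.rpow a _) n

end CStarAlgebra

end UnitaryLE

theorem rpow_leu_of_le_unitary_conj_general {E : Type*} [CStarAlgebra E] [PartialOrder E]
    [StarOrderedRing E] {A B U : E} (hA : 0 ≤ A) (hU : U ∈ unitary E) (hAB : A ≤ star U * B * U)
    {g : ℝ → ℝ} (hg_cont : ContinuousOn g (Set.Ici 0))
    (hg_opMonotone : MonotoneOn (fun X : E ↦ cfc g X) (Set.Ici 0))
    (hgA : IsStrictlyPositive (cfc g A)) {s : ℝ} (hs : 0 ≤ s) :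
    UnitaryLE (cfc (fun x : ℝ ↦ x ^ s) (cfc g A))
      (star U * cfc (fun x : ℝ ↦ x ^ s) (cfc g B) * U) := by
  have hB : 0 ≤ B :=
    (IsUnit.star_left_conjugate_nonneg_iff (Unitary.isUnit_coe (U := ⟨U, hU⟩))).1 (hA.trans hAB)
  have hg_spectrum : ContinuousOn g (spectrum ℝ B) :=
    hg_cont.mono fun _ hx ↦ spectrum_nonneg_of_nonneg hB hx
  have hg_le : cfc g A ≤ star U * cfc g B * U := by
    rw [← cfc_star_left_conjugate hU (.of_nonneg hB) hg_spectrum]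
    exact hg_opMonotone hA (hA.trans hAB) hAB
  rw [← cfc_star_left_conjugate hU (cfc_predicate g B)
      (Real.continuous_rpow_const hs).continuousOn,
    ← CFC.rpow_eq_cfc_real hgA.nonneg, ← CFC.rpow_eq_cfc_real (hgA.nonneg.trans hg_le)]
  exact UnitaryLE.rpow_of_le hgA hg_le hs

/-- Step in the proof of Theorem 2.8: if `A > 0` (positive and invertible), `A ≤ U*BU`
for a unitary `U`, and `g : [0,∞) → [0,∞)` is a continuous operator monotone function
with `g(A) > 0`, then for every `r > 0` there is a unitary `V` with
`g(A)^{2r} ≤ V* U* g(B)^{2r} U V`; in particular `g(A)^{2r} ≤ᵤ g(B)^{2r}`. -/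
theorem rpow_leu_of_le_unitary_conj (A B U : H →L[ℂ] H)
    (hA : 0 ≤ A) (hAinv : IsUnit A)
    (hU : U ∈ unitary (H →L[ℂ] H)) (hAB : A ≤ star U * B * U)
    (g : ℝ → ℝ) (hg_cont : ContinuousOn g (Set.Ici 0))
    (hg_nonneg : ∀ x : ℝ, 0 ≤ x → 0 ≤ g x)
    (hg_opMonotone : ∀ X Y : H →L[ℂ] H, 0 ≤ X → 0 ≤ Y → X ≤ Y → cfc g X ≤ cfc g Y)
    (hgA_pos : 0 ≤ cfc g A) (hgA_inv : IsUnit (cfc g A)) :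
    ∀ r : ℝ, 0 < r →
      ∃ V ∈ unitary (H →L[ℂ] H),
        cfc (fun x : ℝ => x ^ (2 * r)) (cfc g A) ≤
          star V * (star U * cfc (fun x : ℝ => x ^ (2 * r)) (cfc g B) * U) * V ∧
        ∃ W ∈ unitary (H →L[ℂ] H),
          cfc (fun x : ℝ => x ^ (2 * r)) (cfc g A) ≤
            star W * cfc (fun x : ℝ => x ^ (2 * r)) (cfc g B) * W := by
  intro r hr
  obtain ⟨V, hV, hle⟩ := rpow_leu_of_le_unitary_conj_general hA hU hAB hg_cont
    (fun X hX Y hY ↦ hg_opMonotone X Y hX hY) (hgA_inv.isStrictlyPositive hgA_pos)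
    (mul_pos two_pos hr).le
  exact ⟨V, hV, hle, UnitaryLE.of_star_left_conjugate hU ⟨V, hV, hle⟩⟩
end
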